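/- For all integers n ≥ 1, k ≥ 1 with k even and all 0 ≤ j ≤ k, the real Lagrangian Fix(ρ_j) ∩ V (with the subspace topology of ℂ^{n+1}) is connected. -/

import Mathlib

/-!
Writing `z₀ = ξ t` and `z_m = i y_m`, the condition `ρ_j(z) = z` says exactly that `t` and all the
`y_m` are real. Since `ξ ^ (k + 1) = 1`, the equation of the Milnor fiber becomes
`t ^ (k + 1) = 1 + ∑ y_m ^ 2`. As `k + 1` is odd, this has for every `y ∈ ℝⁿ` exactly one real
solution `t`, the positive `(k + 1)`-st root of the right-hand side. The real Lagrangian is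
therefore the graph of a continuous function on `ℝⁿ`, parametrized by `lagrangianParam`, and so is
connected.
-/

open Complex

/-- The root of unity `ξ_j = exp(2πi·j/(k+1))`. -/
noncomputable def milnorXi (k j : ℕ) : ℂ :=
  Complex.exp (2 * Real.pi * Complex.I * j / (k + 1))

/-- The anti-symplectic involution
`ρ_j(z) = (ξ_j² · conj z₀, −conj z₁, …, −conj zₙ)`. -/
noncomputable def milnorRho (n k j : ℕ) (z : Fin (n + 1) → ℂ) : Fin (n + 1) → ℂ :=
  fun m => if m = 0 then (milnorXi k j) ^ 2 * (starRingEnd ℂ) (z 0)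
           else -((starRingEnd ℂ) (z m))

/-- The A_k-type Milnor fiber `V = {z : z₀^{k+1} + z₁² + ⋯ + zₙ² = 1}`. -/
def milnorFiber (n k : ℕ) : Set (Fin (n + 1) → ℂ) :=
  {z | z 0 ^ (k + 1) + ∑ m : Fin n, (z m.succ) ^ 2 = 1}

lemma milnorXi_pow (k j : ℕ) : milnorXi k j ^ (k + 1) = 1 := by
  have h : ((k : ℂ) + 1) ≠ 0 := by exact_mod_cast Nat.succ_ne_zero k
  rw [milnorXi, ← Complex.exp_nat_mul, Complex.exp_eq_one_iff]
  refine ⟨j, ?_⟩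
  push_cast
  field_simp

lemma milnorXi_mul_conj (k j : ℕ) : milnorXi k j * (starRingEnd ℂ) (milnorXi k j) = 1 := by
  rw [Complex.mul_conj', Complex.norm_eq_one_of_pow_eq_one (milnorXi_pow k j) k.succ_ne_zero]
  simp

/-- The parametrization `y ↦ (ξ_j (1 + |y|²)^{1/(k+1)}, i y₁, …, i yₙ)` of the real Lagrangian
by `ℝⁿ`. -/
noncomputable def lagrangianParam (n k j : ℕ) (y : Fin n → ℝ) : Fin (n + 1) → ℂ :=
  Fin.cons (milnorXi k j * (((1 + ∑ m, y m ^ 2) ^ ((k + 1 : ℕ) : ℝ)⁻¹ : ℝ) : ℂ))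
    (fun m => Complex.I * (y m : ℂ))

lemma continuous_lagrangianParam (n k j : ℕ) : Continuous (lagrangianParam n k j) := by
  refine continuous_pi (Fin.cases ?_ fun m => ?_)
  · simp only [lagrangianParam, Fin.cons_zero]
    refine continuous_const.mul (Complex.continuous_ofReal.comp ?_)
    refine Continuous.rpow_const (by fun_prop) fun y => Or.inr (by positivity)
  · simp only [lagrangianParam, Fin.cons_succ]
    fun_prop

/-- For `k` even, an odd power `t ^ (k + 1)` of a real number determines `t`, so every point of
the real Lagrangian is in the image of the parametrization. -/
lemma range_lagrangianParam (n k j : ℕ) (hke : Even k) :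
    Set.range (lagrangianParam n k j) =
      {z : Fin (n + 1) → ℂ | milnorRho n k j z = z} ∩ milnorFiber n k := by
  have hxi := milnorXi_mul_conj k j
  have hpow := milnorXi_pow k j
  apply Set.Subset.antisymm
  · rintro _ ⟨y, rfl⟩
    refine ⟨?_, ?_⟩
    · refine funext (Fin.cases ?_ fun m => ?_)
      · simp only [milnorRho, lagrangianParam, if_true, Fin.cons_zero, map_mul,
          Complex.conj_ofReal]
        linear_combination (milnorXi k j *
          (((1 + ∑ m, y m ^ 2) ^ ((k + 1 : ℕ) : ℝ)⁻¹ : ℝ) : ℂ)) * hxi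
      · simp [milnorRho, lagrangianParam, Fin.succ_ne_zero]
    · have hS : 0 ≤ 1 + ∑ m, y m ^ 2 := by positivity
      simp only [milnorFiber, Set.mem_ofPred_eq, lagrangianParam, Fin.cons_zero, Fin.cons_succ,
        mul_pow, hpow, one_mul, Complex.I_sq, ← Finset.mul_sum]
      rw [← Complex.ofReal_pow, Real.rpow_inv_natCast_pow hS k.succ_ne_zero]
      push_cast
      ring
  · rintro z ⟨hfix, hV⟩
    have h0 : milnorXi k j ^ 2 * (starRingEnd ℂ) (z 0) = z 0 := by
      simpa [milnorRho] using congrFun hfix 0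
    have hs (m : Fin n) : -(starRingEnd ℂ) (z m.succ) = z m.succ := by
      simpa [milnorRho, Fin.succ_ne_zero] using congrFun hfix m.succ
    -- The real coordinate `t = conj ξ * z₀`.
    obtain ⟨t, ht⟩ : ∃ t : ℝ, (starRingEnd ℂ) (milnorXi k j) * z 0 = t := by
      refine Complex.conj_eq_iff_real.mp ?_
      rw [map_mul, Complex.conj_conj]
      linear_combination (starRingEnd ℂ) (milnorXi k j) * h0 -
        milnorXi k j * (starRingEnd ℂ) (z 0) * hxi
    have hz0 : z 0 = milnorXi k j * t := by
      linear_combination milnorXi k j * ht - z 0 * hxi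
    have hzs (m : Fin n) : z m.succ = Complex.I * ((z m.succ).im : ℂ) := by
      have hre := congrArg Complex.re (hs m)
      simp only [Complex.neg_re, Complex.conj_re] at hre
      apply Complex.ext
      · simp; linarith
      · simp
    have ht_pow : t ^ (k + 1) = 1 + ∑ m : Fin n, (z m.succ).im ^ 2 := by
      have hV' : z 0 ^ (k + 1) + ∑ m : Fin n, (z m.succ) ^ 2 = 1 := hV
      have hsum : ∑ m : Fin n, (z m.succ) ^ 2 = -∑ m : Fin n, ((z m.succ).im : ℂ) ^ 2 := by
        rw [← Finset.sum_neg_distrib]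
        refine Finset.sum_congr rfl fun m _ => ?_
        conv_lhs => rw [hzs m, mul_pow, Complex.I_sq, neg_one_mul]
      rw [hsum, hz0, mul_pow, hpow, one_mul] at hV'
      have : ((t ^ (k + 1) : ℝ) : ℂ) = ((1 + ∑ m : Fin n, (z m.succ).im ^ 2 : ℝ) : ℂ) := by
        push_cast
        linear_combination hV'
      exact_mod_cast this
    have ht_nonneg : 0 ≤ t := by
      rw [← hke.add_one.pow_nonneg_iff, ht_pow]
      positivity
    refine ⟨fun m => (z m.succ).im, funext (Fin.cases ?_ fun m => ?_)⟩
    · simp only [lagrangianParam, Fin.cons_zero]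
      rw [← ht_pow, Real.pow_rpow_inv_natCast ht_nonneg k.succ_ne_zero, hz0]
    · simp only [lagrangianParam, Fin.cons_succ]
      exact (hzs m).symm

theorem real_lagrangian_connected_of_even (n k j : ℕ)
    (hn : 1 ≤ n) (hk : 1 ≤ k) (hke : Even k) (hj : j ≤ k) :
    IsConnected ({z : Fin (n + 1) → ℂ | milnorRho n k j z = z} ∩ milnorFiber n k) := by
  rw [← range_lagrangianParam n k j hke]
  exact isConnected_range (continuous_lagrangianParam n k j)
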